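/- Let n ≥ 1, let δ > 0, let γ₁, γ₂ > 0 with γ₁ ≠ γ₂, let θ* ∈ ℝⁿ, let φ : ℝ → ℝⁿ be continuous with |φ(s)| ≤ φ_M for all s ∈ [0,δ], where φ_M ≥ 0, exciting on [0,δ] with level η > 0, and let w : ℝ → ℝ be continuous with |w(t)| ≤ W for all t ∈ [0,δ]. Define y(t) = ⟨φ(t), θ*⟩ + w(t). For i = 1,2, let θᵢ : [0,δ] → ℝⁿ solve θᵢ'(t) = −γᵢ(⟨φ(t), θᵢ(t)⟩ − y(t))φ(t) with θ₁(0) = θ₂(0), and let Φᵢ solve Φᵢ'(t) = −γᵢ φ(t)φ(t)ᵀ Φᵢ(t), Φᵢ(0) = I. Assume 0 < φ_M²γ₂δ < 1 and 0 < (1 − 2ηγ₁/(1 + φ_M²γ₁δ)²)(1 + 2γ₂φ_M²δ/(1 − φ_M²γ₂δ)²) < 1, and set κ₁ = √(1 − 2ηγ₁/(1 + φ_M²γ₁δ)²) and κ₂ = √(1 + 2γ₂φ_M²δ/(1 − φ_M²γ₂δ)²). Then Φ₁(δ) − Φ₂(δ) is invertible and, with K₁ = −Φ₂(δ)(Φ₁(δ)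 − Φ₂(δ))⁻¹ and K₂ = I − K₁, one has |K₁θ₁(δ) + K₂θ₂(δ) − θ*| ≤ (γ₁ + γ₂) φ_M δ W / (1 − κ₁κ₂). -/

import Mathlib

open scoped RealInnerProductSpace

/-!
Along the error dynamics `ẋ = -γ φ φᵀ x` the quantity `‖x‖²` decreases by exactly `2γ ∫ ⟪φ, x⟫²`.
By excitation and the Cauchy-Schwarz inequality this loss is at least a fixed fraction of the
initial energy, so `‖Φ₁ v‖ ≤ κ₁ ‖v‖`. When `φM² γ₂ δ < 1` the state cannot move far, so the loss is
at most a fixed multiple of the final energy and `‖v‖ ≤ κ₂ ‖Φ₂ v‖`. Hence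
`‖Φ₁ v‖ ≤ κ₁ κ₂ ‖Φ₂ v‖` with `κ₁ κ₂ < 1`, and `Φ₁ - Φ₂` is injective.

The estimation errors at time `δ` are `Φᵢ e + νᵢ` with a common initial error `e` and noise
responses `‖νᵢ‖ ≤ γᵢ φM δ W`. The gains satisfy `K₁ Φ₁ + K₂ Φ₂ = 0`, so `e` cancels. For
`C = (Φ₁ - Φ₂)⁻¹` one has `K₁ = -Φ₂ C` and `K₂ = Φ₁ C`, both of norm at most `1 / (1 - κ₁ κ₂)`.
-/

open Set MeasureTheory

section IntervalIntegral

variable {a b : ℝ} {f : ℝ → ℝ}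

theorem integral_add_const_sq (hab : a ≤ b) (hf : ContinuousOn f (Icc a b)) (c : ℝ) :
    ∫ s in a..b, (f s + c) ^ 2 =
      (∫ s in a..b, f s ^ 2) + 2 * c * (∫ s in a..b, f s) + (b - a) * c ^ 2 := by
  have hint : IntervalIntegrable (fun s ↦ 2 * c * f s) volume a b :=
    (hf.const_mul _).intervalIntegrable_of_Icc hab
  have hint_sq : IntervalIntegrable (fun s ↦ f s ^ 2) volume a b :=
    (hf.pow 2).intervalIntegrable_of_Icc hab
  have hexpand (s : ℝ) : (f s + c) ^ 2 = f s ^ 2 + 2 * c * f s + c ^ 2 := by ring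
  simp_rw [hexpand]
  rw [intervalIntegral.integral_add (hint_sq.add hint) intervalIntegrable_const,
    intervalIntegral.integral_add hint_sq hint, intervalIntegral.integral_const_mul,
    intervalIntegral.integral_const, smul_eq_mul]

theorem sq_integral_le_sub_mul_integral_sq (hab : a ≤ b) (hf : ContinuousOn f (Icc a b)) :
    (∫ s in a..b, f s) ^ 2 ≤ (b - a) * ∫ s in a..b, f s ^ 2 := by
  have hquad (c : ℝ) :
      0 ≤ (b - a) * (c * c) + (2 * ∫ s in a..b, f s) * c + ∫ s in a..b, f s ^ 2 :=
    calc 0 ≤ ∫ s in a..b, (f s + c) ^ 2 :=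
          intervalIntegral.integral_nonneg hab fun s _ ↦ sq_nonneg _
      _ = _ := by rw [integral_add_const_sq hab hf]; ring
  have hdiscrim := discrim_le_zero hquad
  rw [discrim] at hdiscrim
  linarith

theorem integral_add_mul_integral_sq_le (hab : a ≤ b) (hf : ContinuousOn f (Icc a b)) {q : ℝ}
    (hq : 0 ≤ q) :
    ∫ s in a..b, (f s + q * ∫ r in a..b, f r) ^ 2 ≤
      (1 + q * (b - a)) ^ 2 * ∫ s in a..b, f s ^ 2 := by
  have : 0 ≤ b - a := sub_nonneg.2 hab
  calc ∫ s in a..b, (f s + q * ∫ r in a..b, f r) ^ 2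
      = (∫ s in a..b, f s ^ 2) + (2 * q + q ^ 2 * (b - a)) * (∫ s in a..b, f s) ^ 2 := by
        rw [integral_add_const_sq hab hf]; ring
    _ ≤ (∫ s in a..b, f s ^ 2) +
          (2 * q + q ^ 2 * (b - a)) * ((b - a) * ∫ s in a..b, f s ^ 2) := by
        gcongr; exact sq_integral_le_sub_mul_integral_sq hab hf
    _ = (1 + q * (b - a)) ^ 2 * ∫ s in a..b, f s ^ 2 := by ring

end IntervalIntegral

section Reset

theorem norm_le_norm_sub_div_of_norm_le_mul {F : Type*} [SeminormedAddCommGroup F] {x y : F}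
    {κ : ℝ} (hκ : κ < 1) (h : ‖x‖ ≤ κ * ‖y‖) : ‖y‖ ≤ ‖x - y‖ / (1 - κ) := by
  rw [le_div_iff₀ (sub_pos.2 hκ)]
  linarith [norm_sub_norm_le y x, norm_sub_rev y x]

variable {E : Type*} [NormedAddCommGroup E] [NormedSpace ℝ E]
  {A B K : E →L[ℝ] E} {κ : ℝ}

theorem isUnit_sub_of_norm_le_mul [FiniteDimensional ℝ E] (hκ : κ < 1)
    (hAB : ∀ v, ‖A v‖ ≤ κ * ‖B v‖) (hB : Function.Injective B) : IsUnit (A - B) := by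
  have := FiniteDimensional.complete ℝ E
  have hinj : Function.Injective (A - B) := by
    refine (injective_iff_map_eq_zero _).2 fun v hv ↦ (map_eq_zero_iff B hB).1 ?_
    have hle := norm_le_norm_sub_div_of_norm_le_mul hκ (hAB v)
    rw [sub_apply] at hv
    rwa [hv, norm_zero, zero_div, norm_le_zero_iff] at hle
  exact ContinuousLinearMap.isUnit_iff_bijective.2
    ⟨hinj, LinearMap.injective_iff_surjective.1 hinj⟩

theorem reset_apply_eq (hK : K * (A - B) = -B) (x y e : E) :
    K x + (1 - K) y = K (x - A e) + (1 - K) (y - B e) := by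
  have hKe : K (A e) - K (B e) = -B e := by simpa using congr($hK e)
  simp only [map_sub, sub_apply, one_apply_eq_self]
  rw [sub_eq_iff_eq_add.1 hKe]
  abel

theorem norm_reset_apply_le (hκ : κ < 1) (hAB : ∀ v, ‖A v‖ ≤ κ * ‖B v‖) (hunit : IsUnit (A - B))
    (hK : K * (A - B) = -B) (x y : E) : ‖K x + (1 - K) y‖ ≤ (‖x‖ + ‖y‖) / (1 - κ) := by
  obtain ⟨C, hC⟩ := hunit.exists_right_inv
  have hC_apply (v : E) : A (C v) - B (C v) = v := by simpa using congr($hC v)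
  have hK_eq : K = -B * C := by rw [← hK, mul_assoc, hC, mul_one]
  have hK_apply (v : E) : K v = -B (C v) := by
    rw [hK_eq, ContinuousLinearMap.mul_def, ContinuousLinearMap.comp_apply, neg_apply]
  have hK_compl_apply (v : E) : (1 - K) v = A (C v) := by
    rw [sub_apply, one_apply_eq_self, hK_apply, sub_neg_eq_add]
    exact (sub_eq_iff_eq_add.1 (hC_apply v)).symm
  have hB_le (v : E) : ‖B (C v)‖ ≤ ‖v‖ / (1 - κ) := by
    simpa only [hC_apply] using norm_le_norm_sub_div_of_norm_le_mul hκ (hAB (C v))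
  have hA_le (v : E) : ‖A (C v)‖ ≤ ‖v‖ / (1 - κ) :=
    ((hAB _).trans (mul_le_of_le_one_left (norm_nonneg _) hκ.le)).trans (hB_le v)
  calc ‖K x + (1 - K) y‖ ≤ ‖B (C x)‖ + ‖A (C y)‖ := by
        rw [hK_apply, hK_compl_apply, ← norm_neg (B (C x))]
        exact norm_add_le _ _
    _ ≤ ‖x‖ / (1 - κ) + ‖y‖ / (1 - κ) := add_le_add (hB_le x) (hA_le y)
    _ = _ := (add_div _ _ _).symm

end Reset

section GradientEstimator

variable {E : Type*} [NormedAddCommGroup E] [InnerProductSpace ℝ E] {a b : ℝ}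

theorem norm_le_add_mul_of_inner_deriv_le {f f' : ℝ → E} {c : ℝ} (hab : a ≤ b) (hc : 0 ≤ c)
    (hf : ∀ t ∈ Icc a b, HasDerivWithinAt f (f' t) (Icc a b) t)
    (hbound : ∀ t ∈ Ico a b, ⟪f t, f' t⟫ ≤ c * ‖f t‖) :
    ‖f b‖ ≤ ‖f a‖ + c * (b - a) := by
  refine le_of_forall_pos_le_add fun ε hε ↦ ?_
  have hpos (t : ℝ) : 0 < ‖f t‖ ^ 2 + ε ^ 2 := by positivity
  -- The norm is not differentiable at `0`, so it is replaced by `√(‖f‖ ^ 2 + ε ^ 2)`.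
  have hderiv (t : ℝ) (ht : t ∈ Icc a b) :
      HasDerivWithinAt (fun s ↦ √(‖f s‖ ^ 2 + ε ^ 2))
        (2 * ⟪f t, f' t⟫ / (2 * √(‖f t‖ ^ 2 + ε ^ 2))) (Icc a b) t :=
    ((hf t ht).norm_sq.add_const _).sqrt (hpos t).ne'
  have hnorm_le (t : ℝ) : ‖f t‖ ≤ √(‖f t‖ ^ 2 + ε ^ 2) :=
    Real.le_sqrt_of_sq_le (le_add_of_nonneg_right (sq_nonneg ε))
  have hfence : √(‖f b‖ ^ 2 + ε ^ 2) ≤ √(‖f a‖ ^ 2 + ε ^ 2) + c * (b - a) := by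
    refine image_le_of_deriv_right_le_deriv_boundary
      (B := fun t ↦ √(‖f a‖ ^ 2 + ε ^ 2) + c * (t - a)) (B' := fun _ ↦ c)
      (fun t ht ↦ (hderiv t ht).continuousWithinAt)
      (fun t ht ↦ (hderiv t (Ico_subset_Icc_self ht)).mono_of_mem_nhdsWithin
        (Icc_mem_nhdsGE_of_mem ht))
      (by simp) (by fun_prop)
      (fun t _ ↦ by
        simpa using ((((hasDerivAt_id t).sub_const a).const_mul c).const_add
          (√(‖f a‖ ^ 2 + ε ^ 2))).hasDerivWithinAt)
      (fun t ht ↦ ?_) (right_mem_Icc.2 hab)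
    rw [mul_div_mul_left _ _ two_ne_zero, div_le_iff₀ (Real.sqrt_pos.2 (hpos t))]
    exact (hbound t ht).trans (mul_le_mul_of_nonneg_left (hnorm_le t) hc)
  have hsqrt : √(‖f a‖ ^ 2 + ε ^ 2) ≤ ‖f a‖ + ε :=
    Real.sqrt_le_iff.2 ⟨by positivity, by nlinarith [mul_nonneg (norm_nonneg (f a)) hε.le]⟩
  linarith [hnorm_le b]

/-- The regressor `φ` is exciting on `[a, b]` with level `η`: its Gram operator over the interval
dominates `η` times the identity. -/
def IsExciting (φ : ℝ → E) (a b η : ℝ) : Prop :=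
  ∀ v : E, η * ‖v‖ ^ 2 ≤ ∫ s in a..b, ⟪φ s, v⟫ ^ 2

/-- `θ` is a trajectory on `[a, b]` of the gradient estimator with rate `γ`, regressor `φ` and
measured output `y`; the output `0` gives the error dynamics `ẋ = -γ φ φᵀ x`. Derivatives are
taken within `[a, b]`, hence one-sided at the endpoints. -/
def IsGradientTrajectory (γ : ℝ) (φ : ℝ → E) (y : ℝ → ℝ) (a b : ℝ) (θ : ℝ → E) : Prop :=
  ∀ t ∈ Icc a b, HasDerivWithinAt θ (-(γ * (⟪φ t, θ t⟫ - y t)) • φ t) (Icc a b) t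

/-- `Φ` is the state transition operator on `[a, b]` of the error dynamics `ẋ = -γ φ φᵀ x`, the
operator differential equation being imposed pointwise on vectors. -/
structure IsTransitionOperator (γ : ℝ) (φ : ℝ → E) (a b : ℝ) (Φ : ℝ → E →L[ℝ] E) : Prop where
  map_left : Φ a = 1
  isGradientTrajectory (v : E) : IsGradientTrajectory γ φ 0 a b fun t ↦ Φ t v

variable {γ φM η : ℝ} {φ x : ℝ → E}

namespace IsGradientTrajectory

variable {y y₁ y₂ : ℝ → ℝ} {θ θ₁ θ₂ : ℝ → E}

theorem mono (hθ : IsGradientTrajectory γ φ y a b θ) {c d : ℝ} (hsub : Icc c d ⊆ Icc a b) :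
    IsGradientTrajectory γ φ y c d θ :=
  fun t ht ↦ (hθ t (hsub ht)).mono hsub

theorem continuousOn (hθ : IsGradientTrajectory γ φ y a b θ) : ContinuousOn θ (Icc a b) :=
  fun t ht ↦ (hθ t ht).continuousWithinAt

theorem hasDerivAt (hθ : IsGradientTrajectory γ φ y a b θ) {t : ℝ} (ht : t ∈ Ioo a b) :
    HasDerivAt θ (-(γ * (⟪φ t, θ t⟫ - y t)) • φ t) t :=
  (hθ t (Ioo_subset_Icc_self ht)).hasDerivAt (Icc_mem_nhds ht.1 ht.2)

theorem sub (hθ₁ : IsGradientTrajectory γ φ y₁ a b θ₁) (hθ₂ : IsGradientTrajectory γ φ y₂ a b θ₂) :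
    IsGradientTrajectory γ φ (y₁ - y₂) a b (θ₁ - θ₂) := fun t ht ↦ by
  refine ((hθ₁ t ht).sub (hθ₂ t ht)).congr_deriv ?_
  simp only [Pi.sub_apply, inner_sub_right]
  module

theorem const (θs : E) : IsGradientTrajectory γ φ (fun t ↦ ⟪φ t, θs⟫) a b fun _ ↦ θs :=
  fun t _ ↦ by simpa using hasDerivWithinAt_const t (Icc a b) θs

theorem norm_le_add (hab : a ≤ b) (hγ : 0 ≤ γ) (hφ : ∀ s ∈ Icc a b, ‖φ s‖ ≤ φM) {W : ℝ}
    (hy : ∀ s ∈ Icc a b, |y s| ≤ W) (hθ : IsGradientTrajectory γ φ y a b θ) :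
    ‖θ b‖ ≤ ‖θ a‖ + γ * φM * (b - a) * W := by
  have hφM : 0 ≤ φM := (norm_nonneg _).trans (hφ a (left_mem_Icc.2 hab))
  have hW : 0 ≤ W := (abs_nonneg _).trans (hy a (left_mem_Icc.2 hab))
  have hbound : ∀ t ∈ Ico a b,
      ⟪θ t, -(γ * (⟪φ t, θ t⟫ - y t)) • φ t⟫ ≤ γ * φM * W * ‖θ t‖ := fun t ht ↦ by
    have ht' := Ico_subset_Icc_self ht
    have hnoise : y t * ⟪φ t, θ t⟫ ≤ W * (φM * ‖θ t‖) :=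
      calc y t * ⟪φ t, θ t⟫ ≤ |y t| * |⟪φ t, θ t⟫| := (le_abs_self _).trans_eq (abs_mul _ _)
        _ ≤ W * (‖φ t‖ * ‖θ t‖) := by
            gcongr
            exacts [hy t ht', abs_real_inner_le_norm _ _]
        _ ≤ W * (φM * ‖θ t‖) := by gcongr; exact hφ t ht'
    calc ⟪θ t, -(γ * (⟪φ t, θ t⟫ - y t)) • φ t⟫
        = γ * (y t * ⟪φ t, θ t⟫) - γ * ⟪φ t, θ t⟫ ^ 2 := by
          rw [inner_smul_right, real_inner_comm]; ring
      _ ≤ γ * (W * (φM * ‖θ t‖)) - 0 := by gcongr; positivity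
      _ = γ * φM * W * ‖θ t‖ := by ring
  linarith [norm_le_add_mul_of_inner_deriv_le hab (by positivity) hθ hbound]

theorem norm_le (hab : a ≤ b) (hγ : 0 ≤ γ) (hx : IsGradientTrajectory γ φ 0 a b x) :
    ‖x b‖ ≤ ‖x a‖ := by
  have hdissipative (t : ℝ) : ⟪x t, -(γ * (⟪φ t, x t⟫ - (0 : ℝ → ℝ) t)) • φ t⟫ ≤ 0 :=
    calc ⟪x t, -(γ * (⟪φ t, x t⟫ - (0 : ℝ → ℝ) t)) • φ t⟫ = -(γ * ⟪φ t, x t⟫ ^ 2) := by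
          rw [inner_smul_right, real_inner_comm, Pi.zero_apply]; ring
      _ ≤ 0 := neg_nonpos.2 (by positivity)
  simpa using norm_le_add_mul_of_inner_deriv_le hab le_rfl hx fun t _ ↦ by
    simpa only [zero_mul] using hdissipative t

theorem norm_sq_eq_sub_integral (hab : a ≤ b) (hφc : ContinuousOn φ (Icc a b))
    (hx : IsGradientTrajectory γ φ 0 a b x) :
    ‖x b‖ ^ 2 = ‖x a‖ ^ 2 - 2 * γ * ∫ s in a..b, ⟪φ s, x s⟫ ^ 2 := by
  have hFTC : ∫ s in a..b, -(2 * γ) * ⟪φ s, x s⟫ ^ 2 = ‖x b‖ ^ 2 - ‖x a‖ ^ 2 := by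
    refine intervalIntegral.integral_eq_sub_of_hasDerivAt_of_le hab (hx.continuousOn.norm.pow 2)
      (fun s hs ↦ (hx.hasDerivAt hs).norm_sq.congr_deriv ?_)
      (((hφc.inner hx.continuousOn).pow 2).const_mul _ |>.intervalIntegrable_of_Icc hab)
    rw [inner_smul_right, real_inner_comm, Pi.zero_apply]
    ring
  rw [intervalIntegral.integral_const_mul] at hFTC
  linarith

theorem norm_sub_le_integral (hab : a ≤ b) (hγ : 0 ≤ γ) (hφc : ContinuousOn φ (Icc a b))
    (hφ : ∀ s ∈ Icc a b, ‖φ s‖ ≤ φM) (hx : IsGradientTrajectory γ φ 0 a b x) :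
    ‖x b - x a‖ ≤ γ * φM * ∫ s in a..b, |⟪φ s, x s⟫| := by
  rw [← intervalIntegral.integral_const_mul]
  refine norm_sub_le_integral_of_norm_deriv_le_of_le hab hx.continuousOn
    (fun s hs ↦ (hx.hasDerivAt hs).differentiableAt.differentiableWithinAt)
    (.of_forall fun s hs ↦ ?_)
    ((hφc.inner hx.continuousOn).abs.const_mul _ |>.intervalIntegrable_of_Icc hab)
  rw [(hx.hasDerivAt hs).deriv, norm_smul, Pi.zero_apply, sub_zero, norm_neg, norm_mul,
    Real.norm_of_nonneg hγ, Real.norm_eq_abs, mul_right_comm]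
  gcongr
  exact hφ s (Ioo_subset_Icc_self hs)

theorem abs_inner_left_le (hab : a ≤ b) (hγ : 0 ≤ γ) (hφc : ContinuousOn φ (Icc a b))
    (hφ : ∀ s ∈ Icc a b, ‖φ s‖ ≤ φM) (hx : IsGradientTrajectory γ φ 0 a b x) {s : ℝ}
    (hs : s ∈ Icc a b) :
    |⟪φ s, x a⟫| ≤ |⟪φ s, x s⟫| + φM ^ 2 * γ * ∫ r in a..b, |⟪φ r, x r⟫| := by
  have hφM : 0 ≤ φM := (norm_nonneg _).trans (hφ a (left_mem_Icc.2 hab))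
  have hsub : Icc a s ⊆ Icc a b := Icc_subset_Icc_right hs.2
  have hint : IntervalIntegrable (fun r ↦ |⟪φ r, x r⟫|) volume a b :=
    (hφc.inner hx.continuousOn).abs.intervalIntegrable_of_Icc hab
  have hdisp : ‖x s - x a‖ ≤ γ * φM * ∫ r in a..b, |⟪φ r, x r⟫| :=
    calc ‖x s - x a‖ ≤ γ * φM * ∫ r in a..s, |⟪φ r, x r⟫| :=
          norm_sub_le_integral hs.1 hγ (hφc.mono hsub) (fun r hr ↦ hφ r (hsub hr)) (hx.mono hsub)
      _ ≤ γ * φM * ∫ r in a..b, |⟪φ r, x r⟫| := by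
          gcongr
          exact intervalIntegral.integral_mono_interval le_rfl hs.1 hs.2
            (.of_forall fun r ↦ abs_nonneg _) hint
  calc |⟪φ s, x a⟫| = |⟪φ s, x s⟫ - ⟪φ s, x s - x a⟫| := by rw [inner_sub_right, sub_sub_cancel]
    _ ≤ |⟪φ s, x s⟫| + ‖φ s‖ * ‖x s - x a‖ :=
        (abs_sub _ _).trans (by gcongr; exact abs_real_inner_le_norm _ _)
    _ ≤ |⟪φ s, x s⟫| + φM * (γ * φM * ∫ r in a..b, |⟪φ r, x r⟫|) := by
        gcongr; exact hφ s hs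
    _ = _ := by ring

theorem mul_norm_sq_le_integral (hab : a ≤ b) (hγ : 0 ≤ γ) (hφc : ContinuousOn φ (Icc a b))
    (hφ : ∀ s ∈ Icc a b, ‖φ s‖ ≤ φM) (hexc : IsExciting φ a b η)
    (hx : IsGradientTrajectory γ φ 0 a b x) :
    η * ‖x a‖ ^ 2 ≤ (1 + φM ^ 2 * γ * (b - a)) ^ 2 * ∫ s in a..b, ⟪φ s, x s⟫ ^ 2 := by
  have hinner : ContinuousOn (fun s ↦ |⟪φ s, x s⟫|) (Icc a b) := (hφc.inner hx.continuousOn).abs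
  calc η * ‖x a‖ ^ 2 ≤ ∫ s in a..b, ⟪φ s, x a⟫ ^ 2 := hexc (x a)
    _ ≤ ∫ s in a..b, (|⟪φ s, x s⟫| + φM ^ 2 * γ * ∫ r in a..b, |⟪φ r, x r⟫|) ^ 2 := by
        refine intervalIntegral.integral_mono_on hab
          ((hφc.inner continuousOn_const).pow 2 |>.intervalIntegrable_of_Icc hab)
          ((hinner.add continuousOn_const).pow 2 |>.intervalIntegrable_of_Icc hab) fun s hs ↦ ?_
        rw [← sq_abs ⟪φ s, x a⟫]
        gcongr
        exact abs_inner_left_le hab hγ hφc hφ hx hs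
    _ ≤ (1 + φM ^ 2 * γ * (b - a)) ^ 2 * ∫ s in a..b, |⟪φ s, x s⟫| ^ 2 :=
        integral_add_mul_integral_sq_le hab hinner (by positivity)
    _ = _ := by simp only [sq_abs]

theorem norm_sq_right_le (hab : a ≤ b) (hγ : 0 ≤ γ) (hφc : ContinuousOn φ (Icc a b))
    (hφ : ∀ s ∈ Icc a b, ‖φ s‖ ≤ φM) (hexc : IsExciting φ a b η)
    (hx : IsGradientTrajectory γ φ 0 a b x) :
    ‖x b‖ ^ 2 ≤ (1 - 2 * η * γ / (1 + φM ^ 2 * γ * (b - a)) ^ 2) * ‖x a‖ ^ 2 := by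
  have : 0 ≤ b - a := sub_nonneg.2 hab
  have hdissipation : η * ‖x a‖ ^ 2 / (1 + φM ^ 2 * γ * (b - a)) ^ 2 ≤
      ∫ s in a..b, ⟪φ s, x s⟫ ^ 2 :=
    (div_le_iff₀' (by positivity)).2 (mul_norm_sq_le_integral hab hγ hφc hφ hexc hx)
  calc ‖x b‖ ^ 2 = ‖x a‖ ^ 2 - 2 * γ * ∫ s in a..b, ⟪φ s, x s⟫ ^ 2 :=
        norm_sq_eq_sub_integral hab hφc hx
    _ ≤ ‖x a‖ ^ 2 - 2 * γ * (η * ‖x a‖ ^ 2 / (1 + φM ^ 2 * γ * (b - a)) ^ 2) := by gcongr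
    _ = _ := by ring

theorem abs_inner_le (hγ : 0 ≤ γ) (hφ : ∀ s ∈ Icc a b, ‖φ s‖ ≤ φM)
    (hx : IsGradientTrajectory γ φ 0 a b x) {s : ℝ} (hs : s ∈ Icc a b) :
    |⟪φ s, x s⟫| ≤ φM * ‖x a‖ := by
  have hdecay : ‖x s‖ ≤ ‖x a‖ := norm_le hs.1 hγ (hx.mono (Icc_subset_Icc_right hs.2))
  exact (abs_real_inner_le_norm _ _).trans
    (mul_le_mul (hφ s hs) hdecay (norm_nonneg _) ((norm_nonneg _).trans (hφ s hs)))

theorem norm_left_le (hab : a ≤ b) (hγ : 0 ≤ γ) (hφ : ∀ s ∈ Icc a b, ‖φ s‖ ≤ φM)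
    (hsmall : φM ^ 2 * γ * (b - a) < 1) (hx : IsGradientTrajectory γ φ 0 a b x) :
    ‖x a‖ ≤ ‖x b‖ / (1 - φM ^ 2 * γ * (b - a)) := by
  have hφM : 0 ≤ φM := (norm_nonneg _).trans (hφ a (left_mem_Icc.2 hab))
  have hspeed : ∀ s ∈ Ico a b,
      ‖-(γ * (⟪φ s, x s⟫ - (0 : ℝ → ℝ) s)) • φ s‖ ≤ γ * (φM * ‖x a‖) * φM := fun s hs ↦ by
    have hs' := Ico_subset_Icc_self hs
    rw [Pi.zero_apply, sub_zero, norm_smul, norm_neg, norm_mul, Real.norm_of_nonneg hγ,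
      Real.norm_eq_abs]
    gcongr
    exacts [abs_inner_le hγ hφ hx hs', hφ s hs']
  have hdisp := norm_image_sub_le_of_norm_deriv_le_segment' hx hspeed b (right_mem_Icc.2 hab)
  rw [le_div_iff₀ (sub_pos.2 hsmall)]
  linarith [norm_sub_norm_le (x a) (x b), norm_sub_rev (x a) (x b)]

theorem norm_sq_left_le (hab : a ≤ b) (hγ : 0 ≤ γ) (hφc : ContinuousOn φ (Icc a b))
    (hφ : ∀ s ∈ Icc a b, ‖φ s‖ ≤ φM) (hsmall : φM ^ 2 * γ * (b - a) < 1)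
    (hx : IsGradientTrajectory γ φ 0 a b x) :
    ‖x a‖ ^ 2 ≤ (1 + 2 * γ * φM ^ 2 * (b - a) / (1 - φM ^ 2 * γ * (b - a)) ^ 2) * ‖x b‖ ^ 2 := by
  have : 0 ≤ b - a := sub_nonneg.2 hab
  have hdissipation : ∫ s in a..b, ⟪φ s, x s⟫ ^ 2 ≤ (b - a) * (φM * ‖x a‖) ^ 2 := by
    rw [← smul_eq_mul, ← intervalIntegral.integral_const]
    refine intervalIntegral.integral_mono_on hab
      ((hφc.inner hx.continuousOn).pow 2 |>.intervalIntegrable_of_Icc hab)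
      intervalIntegrable_const fun s hs ↦ ?_
    rw [← sq_abs]
    gcongr
    exact abs_inner_le hγ hφ hx hs
  calc ‖x a‖ ^ 2 = ‖x b‖ ^ 2 + 2 * γ * ∫ s in a..b, ⟪φ s, x s⟫ ^ 2 := by
        rw [norm_sq_eq_sub_integral hab hφc hx]; ring
    _ ≤ ‖x b‖ ^ 2 + 2 * γ * ((b - a) * (φM * ‖x a‖) ^ 2) := by gcongr
    _ = ‖x b‖ ^ 2 + 2 * γ * φM ^ 2 * (b - a) * ‖x a‖ ^ 2 := by ring
    _ ≤ ‖x b‖ ^ 2 +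
          2 * γ * φM ^ 2 * (b - a) * (‖x b‖ / (1 - φM ^ 2 * γ * (b - a))) ^ 2 := by
        gcongr; exact norm_left_le hab hγ hφ hsmall hx
    _ = _ := by rw [div_pow]; ring

end IsGradientTrajectory

namespace IsTransitionOperator

variable {Φ : ℝ → E →L[ℝ] E}

theorem norm_apply_le (hΦ : IsTransitionOperator γ φ a b Φ) (hab : a ≤ b) (hγ : 0 ≤ γ)
    (hφc : ContinuousOn φ (Icc a b)) (hφ : ∀ s ∈ Icc a b, ‖φ s‖ ≤ φM)
    (hexc : IsExciting φ a b η) (v : E) :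
    ‖Φ b v‖ ≤ √(1 - 2 * η * γ / (1 + φM ^ 2 * γ * (b - a)) ^ 2) * ‖v‖ := by
  have hsq := (hΦ.isGradientTrajectory v).norm_sq_right_le hab hγ hφc hφ hexc
  rw [hΦ.map_left, one_apply_eq_self] at hsq
  simpa using Real.le_sqrt_of_sq_le hsq

theorem norm_le_norm_apply (hΦ : IsTransitionOperator γ φ a b Φ) (hab : a ≤ b) (hγ : 0 ≤ γ)
    (hφc : ContinuousOn φ (Icc a b)) (hφ : ∀ s ∈ Icc a b, ‖φ s‖ ≤ φM)
    (hsmall : φM ^ 2 * γ * (b - a) < 1) (v : E) :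
    ‖v‖ ≤ √(1 + 2 * γ * φM ^ 2 * (b - a) / (1 - φM ^ 2 * γ * (b - a)) ^ 2) * ‖Φ b v‖ := by
  have hsq := (hΦ.isGradientTrajectory v).norm_sq_left_le hab hγ hφc hφ hsmall
  rw [hΦ.map_left, one_apply_eq_self] at hsq
  simpa using Real.le_sqrt_of_sq_le hsq

theorem norm_error_sub_apply_le (hΦ : IsTransitionOperator γ φ a b Φ) (hab : a ≤ b) (hγ : 0 ≤ γ)
    (hφ : ∀ s ∈ Icc a b, ‖φ s‖ ≤ φM) {y : ℝ → ℝ} {W : ℝ} {θs : E} {θ : ℝ → E}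
    (hW : ∀ s ∈ Icc a b, |y s - ⟪φ s, θs⟫| ≤ W) (hθ : IsGradientTrajectory γ φ y a b θ) :
    ‖θ b - θs - Φ b (θ a - θs)‖ ≤ γ * φM * (b - a) * W := by
  have hν := (hθ.sub (.const θs)).sub (hΦ.isGradientTrajectory (θ a - θs))
  simpa [hΦ.map_left] using hν.norm_le_add hab hγ hφ (W := W) (by simpa using hW)

end IsTransitionOperator

theorem stmt16_general [FiniteDimensional ℝ E] {δ γ₁ γ₂ W κ₁ κ₂ : ℝ} {θs : E} {y : ℝ → ℝ}
    {θ₁ θ₂ : ℝ → E} {Φ₁ Φ₂ : ℝ → E →L[ℝ] E} (hab : a ≤ b) (hδ : b - a = δ)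
    (hγ₁ : 0 ≤ γ₁) (hγ₂ : 0 ≤ γ₂) (hφc : ContinuousOn φ (Icc a b))
    (hφ : ∀ s ∈ Icc a b, ‖φ s‖ ≤ φM) (hexc : IsExciting φ a b η)
    (hW : ∀ s ∈ Icc a b, |y s - ⟪φ s, θs⟫| ≤ W)
    (hθ₁ : IsGradientTrajectory γ₁ φ y a b θ₁) (hθ₂ : IsGradientTrajectory γ₂ φ y a b θ₂)
    (hθ : θ₁ a = θ₂ a)
    (hΦ₁ : IsTransitionOperator γ₁ φ a b Φ₁) (hΦ₂ : IsTransitionOperator γ₂ φ a b Φ₂)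
    (hsmall : φM ^ 2 * γ₂ * δ < 1)
    (hgain : (1 - 2 * η * γ₁ / (1 + φM ^ 2 * γ₁ * δ) ^ 2) *
      (1 + 2 * γ₂ * φM ^ 2 * δ / (1 - φM ^ 2 * γ₂ * δ) ^ 2) < 1)
    (hκ₁ : κ₁ = √(1 - 2 * η * γ₁ / (1 + φM ^ 2 * γ₁ * δ) ^ 2))
    (hκ₂ : κ₂ = √(1 + 2 * γ₂ * φM ^ 2 * δ / (1 - φM ^ 2 * γ₂ * δ) ^ 2)) :
    IsUnit (Φ₁ b - Φ₂ b) ∧ ∀ K₁ K₂ : E →L[ℝ] E, K₁ * (Φ₁ b - Φ₂ b) = -Φ₂ b → K₂ = 1 - K₁ →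
      ‖K₁ (θ₁ b) + K₂ (θ₂ b) - θs‖ ≤ (γ₁ + γ₂) * φM * δ * W / (1 - κ₁ * κ₂) := by
  subst hδ
  have : 0 ≤ b - a := sub_nonneg.2 hab
  have hκ : κ₁ * κ₂ < 1 := by
    rw [hκ₁, hκ₂, ← Real.sqrt_mul' _ (by positivity)]
    exact (Real.sqrt_lt' one_pos).2 (by rwa [one_pow])
  have hcontract := hΦ₁.norm_apply_le hab hγ₁ hφc hφ hexc
  have hexpand := hΦ₂.norm_le_norm_apply hab hγ₂ hφc hφ hsmall
  rw [← hκ₁] at hcontract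
  rw [← hκ₂] at hexpand
  have hΦ (v : E) : ‖Φ₁ b v‖ ≤ κ₁ * κ₂ * ‖Φ₂ b v‖ :=
    calc ‖Φ₁ b v‖ ≤ κ₁ * ‖v‖ := hcontract v
      _ ≤ κ₁ * (κ₂ * ‖Φ₂ b v‖) :=
          mul_le_mul_of_nonneg_left (hexpand v) (hκ₁ ▸ Real.sqrt_nonneg _)
      _ = κ₁ * κ₂ * ‖Φ₂ b v‖ := (mul_assoc _ _ _).symm
  have hinj : Function.Injective (Φ₂ b) := (injective_iff_map_eq_zero _).2 fun v hv ↦ by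
    simpa [hv] using hexpand v
  have hunit := isUnit_sub_of_norm_le_mul hκ hΦ hinj
  refine ⟨hunit, ?_⟩
  rintro K₁ _ hK rfl
  have hν₁ := hΦ₁.norm_error_sub_apply_le hab hγ₁ hφ hW hθ₁
  have hν₂ := hΦ₂.norm_error_sub_apply_le hab hγ₂ hφ hW hθ₂
  rw [← hθ] at hν₂
  calc ‖K₁ (θ₁ b) + (1 - K₁) (θ₂ b) - θs‖
      = ‖K₁ (θ₁ b - θs) + (1 - K₁) (θ₂ b - θs)‖ := by
        congr 1; simp only [map_sub, sub_apply, one_apply_eq_self]; abel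
    _ ≤ (‖θ₁ b - θs - Φ₁ b (θ₁ a - θs)‖ + ‖θ₂ b - θs - Φ₂ b (θ₁ a - θs)‖) / (1 - κ₁ * κ₂) := by
        rw [reset_apply_eq hK _ _ (θ₁ a - θs)]
        exact norm_reset_apply_le hκ hΦ hunit hK _ _
    _ ≤ (γ₁ * φM * (b - a) * W + γ₂ * φM * (b - a) * W) / (1 - κ₁ * κ₂) :=
        div_le_div_of_nonneg_right (add_le_add hν₁ hν₂) (sub_nonneg.2 hκ.le)
    _ = _ := by ring

end GradientEstimator

section Matrix

variable {ι : Type*} [Fintype ι] [DecidableEq ι] {a b γ : ℝ}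

theorem hasDerivWithinAt_toEuclideanCLM_apply {Φ : ℝ → Matrix ι ι ℝ} {Φ' : Matrix ι ι ℝ}
    {s : Set ℝ} {t : ℝ} (hΦ : ∀ i j, HasDerivWithinAt (fun r ↦ Φ r i j) (Φ' i j) s t)
    (v : EuclideanSpace ℝ ι) :
    HasDerivWithinAt (fun r ↦ Matrix.toEuclideanCLM (𝕜 := ℝ) (Φ r) v)
      (Matrix.toEuclideanCLM (𝕜 := ℝ) Φ' v) s t := by
  rw [hasDerivWithinAt_iff_hasFDerivWithinAt, hasFDerivWithinAt_euclidean]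
  intro i
  have hcoord : HasDerivWithinAt (fun r ↦ ∑ j, Φ r i j * v j) (∑ j, Φ' i j * v j) s t :=
    HasDerivWithinAt.fun_sum fun j _ ↦ (hΦ i j).mul_const (v j)
  exact hcoord.hasFDerivWithinAt.congr_fderiv (by ext; rfl)

theorem toEuclideanCLM_vecMulVec_apply (u p v : EuclideanSpace ℝ ι) :
    Matrix.toEuclideanCLM (𝕜 := ℝ) (Matrix.vecMulVec u p) v = ⟪p, v⟫ • u := by
  ext i
  simp [Matrix.ofLp_toEuclideanCLM, Matrix.vecMulVec_mulVec,
    EuclideanSpace.inner_eq_star_dotProduct, dotProduct_comm, mul_comm]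

theorem isTransitionOperator_toEuclideanCLM {φ : ℝ → EuclideanSpace ℝ ι} {Φ : ℝ → Matrix ι ι ℝ}
    (hΦa : Φ a = 1)
    (hΦ : ∀ t ∈ Icc a b, ∀ i j, HasDerivWithinAt (fun s ↦ Φ s i j)
      ((-γ • (Matrix.vecMulVec (φ t) (φ t) * Φ t)) i j) (Icc a b) t) :
    IsTransitionOperator γ φ a b fun t ↦ Matrix.toEuclideanCLM (𝕜 := ℝ) (Φ t) where
  map_left := by rw [hΦa, map_one]
  isGradientTrajectory v t ht := by
    refine (hasDerivWithinAt_toEuclideanCLM_apply (hΦ t ht) v).congr_deriv ?_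
    rw [map_smul, map_mul, smul_apply, mul_apply_eq_comp,
      toEuclideanCLM_vecMulVec_apply, smul_smul, Pi.zero_apply, sub_zero, neg_mul]

end Matrix

/-- Explicit error bound for the hybrid reset at the first jump
under bounded measurement noise and interval excitation. -/
theorem stmt16 (n : ℕ) (hn : 1 ≤ n) (δ : ℝ) (hδ : 0 < δ)
    (γ₁ γ₂ : ℝ) (hγ₁ : 0 < γ₁) (hγ₂ : 0 < γ₂) (hγ : γ₁ ≠ γ₂)
    (θs : EuclideanSpace ℝ (Fin n))
    (φM : ℝ) (hφM : 0 ≤ φM) (η : ℝ) (hη : 0 < η)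
    (φ : ℝ → EuclideanSpace ℝ (Fin n)) (hφc : Continuous φ)
    (hbound : ∀ s ∈ Set.Icc (0 : ℝ) δ, ‖φ s‖ ≤ φM)
    (hexc : ∀ v : EuclideanSpace ℝ (Fin n), η * ‖v‖ ^ 2 ≤ ∫ s in (0:ℝ)..δ, ⟪φ s, v⟫ ^ 2)
    (w : ℝ → ℝ) (hw : Continuous w)
    (W : ℝ) (hW : ∀ t ∈ Set.Icc (0 : ℝ) δ, |w t| ≤ W)
    (y : ℝ → ℝ) (hy : ∀ t, y t = ⟪φ t, θs⟫ + w t)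
    (θ₁ θ₂ : ℝ → EuclideanSpace ℝ (Fin n))
    (hθ₁ : ∀ t ∈ Set.Icc (0 : ℝ) δ,
      HasDerivAt θ₁ (-(γ₁ * (⟪φ t, θ₁ t⟫ - y t)) • φ t) t)
    (hθ₂ : ∀ t ∈ Set.Icc (0 : ℝ) δ,
      HasDerivAt θ₂ (-(γ₂ * (⟪φ t, θ₂ t⟫ - y t)) • φ t) t)
    (hθ0 : θ₁ 0 = θ₂ 0)
    (Φ₁ Φ₂ : ℝ → Matrix (Fin n) (Fin n) ℝ)
    (hΦ₁0 : Φ₁ 0 = 1) (hΦ₂0 : Φ₂ 0 = 1)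
    (hΦ₁ : ∀ t ∈ Set.Icc (0 : ℝ) δ, ∀ i j, HasDerivAt (fun s => Φ₁ s i j)
      ((-γ₁ • (Matrix.vecMulVec (φ t) (φ t) * Φ₁ t)) i j) t)
    (hΦ₂ : ∀ t ∈ Set.Icc (0 : ℝ) δ, ∀ i j, HasDerivAt (fun s => Φ₂ s i j)
      ((-γ₂ • (Matrix.vecMulVec (φ t) (φ t) * Φ₂ t)) i j) t)
    (h7 : 0 < φM ^ 2 * γ₂ * δ) (h7' : φM ^ 2 * γ₂ * δ < 1)
    (h8 : 0 < (1 - 2 * η * γ₁ / (1 + φM ^ 2 * γ₁ * δ) ^ 2) *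
      (1 + 2 * γ₂ * φM ^ 2 * δ / (1 - φM ^ 2 * γ₂ * δ) ^ 2))
    (h8' : (1 - 2 * η * γ₁ / (1 + φM ^ 2 * γ₁ * δ) ^ 2) *
      (1 + 2 * γ₂ * φM ^ 2 * δ / (1 - φM ^ 2 * γ₂ * δ) ^ 2) < 1)
    (κ₁ κ₂ : ℝ)
    (hκ₁ : κ₁ = Real.sqrt (1 - 2 * η * γ₁ / (1 + φM ^ 2 * γ₁ * δ) ^ 2))
    (hκ₂ : κ₂ = Real.sqrt (1 + 2 * γ₂ * φM ^ 2 * δ / (1 - φM ^ 2 * γ₂ * δ) ^ 2)) :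
    IsUnit (Φ₁ δ - Φ₂ δ) ∧
      ∀ K₁ K₂ : Matrix (Fin n) (Fin n) ℝ,
        K₁ = -(Φ₂ δ * (Φ₁ δ - Φ₂ δ)⁻¹) → K₂ = 1 - K₁ →
        ‖Matrix.toEuclideanCLM (𝕜 := ℝ) K₁ (θ₁ δ) +
            Matrix.toEuclideanCLM (𝕜 := ℝ) K₂ (θ₂ δ) - θs‖ ≤
          (γ₁ + γ₂) * φM * δ * W / (1 - κ₁ * κ₂) := by
  obtain ⟨hunit, hreset⟩ := stmt16_general (θs := θs) (W := W) hδ.le (sub_zero δ) hγ₁.le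
    hγ₂.le hφc.continuousOn hbound hexc (by simpa [hy] using hW)
    (fun t ht ↦ (hθ₁ t ht).hasDerivWithinAt)
    (fun t ht ↦ (hθ₂ t ht).hasDerivWithinAt) hθ0
    (isTransitionOperator_toEuclideanCLM hΦ₁0 fun t ht i j ↦ (hΦ₁ t ht i j).hasDerivWithinAt)
    (isTransitionOperator_toEuclideanCLM hΦ₂0 fun t ht i j ↦ (hΦ₂ t ht i j).hasDerivWithinAt)
    h7' h8' hκ₁ hκ₂
  rw [← map_sub, isUnit_map_iff] at hunit
  refine ⟨hunit, fun K₁ K₂ hK₁ hK₂ ↦ hreset _ _ ?_ (by rw [hK₂, map_sub, map_one])⟩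
  rw [← map_sub, ← map_mul, ← map_neg, hK₁, neg_mul,
    Matrix.nonsing_inv_mul_cancel_right _ _ ((Matrix.isUnit_iff_isUnit_det _).1 hunit)]
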